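/- Let r ∈ ℝ and T > 0. Then there exists a constant C = C(r,T) > 0 such that for every measurable u : [0,T]×[0,∞) → ℝ with ∫_0^T ‖u(s,·)‖_{L_r} ds < ∞ and every t ∈ [0,T], sup_{τ∈[0,t]} sup_{x≥0} | e^{−rx} ∫_0^τ ∫_0^∞ G(τ−s,x,y) u(s,y) dy ds | ≤ C ∫_0^t ‖u(s,·)‖_{L_r} ds. -/

import Mathlib

/-!
The factor `e^{-rx}`, written as `e^{-r(x-y)} e^{-ry}`, turns `G` into the weighted kernel `G_r`
acting on functions that are bounded by the norm `L_r`. On `x, y ≥ 0` the kernel `G(t,x,·)` is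
nonnegative and at most the density of the normal law `N(x, 2t)`, and weighting that density by
`e^{r(y-x)}` gives `e^{r²t}` times the density of `N(x + 2rt, 2t)`. So `G_r(t,x,·)` has mass at
most `e^{r²t}` on the half-line, uniformly in `x`, and `C = e^{r²T}` works.
-/

open MeasureTheory Real Set Filter

/-- Dirichlet heat kernel on `[0,∞)`. -/
noncomputable def G (t x y : ℝ) : ℝ :=
  (Real.sqrt (4 * Real.pi * t))⁻¹ *
    (Real.exp (-(x - y) ^ 2 / (4 * t)) - Real.exp (-(x + y) ^ 2 / (4 * t)))

/-- Exponentially weighted kernel `G_r(t,x,y) = e^{-r(x-y)} G(t,x,y)`. -/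
noncomputable def Gr (r t x y : ℝ) : ℝ := Real.exp (-r * (x - y)) * G t x y

/-- Weighted sup norm `‖v‖_{L_r} = sup_{x ≥ 0} e^{-rx}|v(x)|`. -/
noncomputable def LrNorm (r : ℝ) (v : ℝ → ℝ) : ℝ :=
  sSup ((fun x => Real.exp (-r * x) * |v x|) '' Ici 0)

/-- Weighted sup norm `‖u‖_{C_r^T} = sup_{t ∈ [0,T]} sup_{x ≥ 0} e^{-rx}|u(t,x)|`. -/
noncomputable def CrNorm (r T : ℝ) (u : ℝ → ℝ → ℝ) : ℝ :=
  sSup ((fun q : ℝ × ℝ => Real.exp (-r * q.2) * |u q.1 q.2|) '' (Icc 0 T ×ˢ Ici 0))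

/-- `‖u‖_{C_r^T} < ∞`, expressed as boundedness of the weighted values. -/
def CrBdd (r T : ℝ) (u : ℝ → ℝ → ℝ) : Prop :=
  BddAbove ((fun q : ℝ × ℝ => Real.exp (-r * q.2) * |u q.1 q.2|) '' (Icc 0 T ×ˢ Ici 0))

section HeatKernel

open ProbabilityTheory
open scoped NNReal

lemma exp_mul_gaussianPDFReal (c m : ℝ) (v : ℝ≥0) (y : ℝ) :
    rexp (c * (y - m)) * gaussianPDFReal m v y =
      rexp (v * c ^ 2 / 2) * gaussianPDFReal (m + v * c) v y := by
  rcases eq_or_ne v 0 with rfl | hv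
  · simp only [gaussianPDFReal_zero_var, Pi.zero_apply, mul_zero]
  · have complete_square : c * (y - m) + -(y - m) ^ 2 / (2 * v) =
        v * c ^ 2 / 2 + -(y - (m + v * c)) ^ 2 / (2 * v) := by
      field
    simp only [gaussianPDFReal_def]
    rw [mul_left_comm, ← Real.exp_add, complete_square, Real.exp_add, mul_left_comm]

variable {r t x y : ℝ}

lemma G_nonneg (ht : 0 ≤ t) (hx : 0 ≤ x) (hy : 0 ≤ y) : 0 ≤ G t x y := by
  have hsq : (x - y) ^ 2 ≤ (x + y) ^ 2 := by nlinarith [mul_nonneg hx hy]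
  have hexp : rexp (-(x + y) ^ 2 / (4 * t)) ≤ rexp (-(x - y) ^ 2 / (4 * t)) := by gcongr
  exact mul_nonneg (by positivity) (sub_nonneg.2 hexp)

lemma G_le_gaussianPDFReal (ht : 0 ≤ t) :
    G t x y ≤ gaussianPDFReal x (2 * t).toNNReal y := by
  rw [gaussianPDFReal, Real.coe_toNNReal _ (by positivity), sub_sq_comm y x,
    show 2 * π * (2 * t) = 4 * π * t by ring, show 2 * (2 * t) = 4 * t by ring, G]
  gcongr
  exact sub_le_self _ (Real.exp_pos _).le

lemma Gr_nonneg (ht : 0 ≤ t) (hx : 0 ≤ x) (hy : 0 ≤ y) : 0 ≤ Gr r t x y :=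
  mul_nonneg (Real.exp_pos _).le (G_nonneg ht hx hy)

lemma Gr_le_exp_mul_gaussianPDFReal (ht : 0 ≤ t) :
    Gr r t x y ≤ rexp (r ^ 2 * t) * gaussianPDFReal (x + 2 * t * r) (2 * t).toNNReal y := by
  calc Gr r t x y = rexp (r * (y - x)) * G t x y := by rw [Gr]; ring_nf
    _ ≤ rexp (r * (y - x)) * gaussianPDFReal x (2 * t).toNNReal y := by
      gcongr
      exact G_le_gaussianPDFReal ht
    _ = rexp (r ^ 2 * t) * gaussianPDFReal (x + 2 * t * r) (2 * t).toNNReal y := by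
      rw [exp_mul_gaussianPDFReal, Real.coe_toNNReal _ (by positivity)]
      ring_nf

lemma integrableOn_Gr (ht : 0 ≤ t) (hx : 0 ≤ x) : IntegrableOn (Gr r t x) (Ioi 0) := by
  have hcont : Continuous (Gr r t x) := by unfold Gr G; fun_prop
  refine ((integrable_gaussianPDFReal (x + 2 * t * r) (2 * t).toNNReal).const_mul
    (rexp (r ^ 2 * t))).integrableOn.mono' hcont.aestronglyMeasurable ?_
  refine ae_restrict_of_forall_mem measurableSet_Ioi fun y hy => ?_
  rw [Real.norm_of_nonneg (Gr_nonneg ht hx (mem_Ioi.1 hy).le)]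
  exact Gr_le_exp_mul_gaussianPDFReal ht

lemma setIntegral_Gr_le_exp (ht : 0 < t) (hx : 0 ≤ x) :
    ∫ y in Ioi 0, Gr r t x y ≤ rexp (r ^ 2 * t) := by
  set g := gaussianPDFReal (x + 2 * t * r) (2 * t).toNNReal
  have hg : Integrable fun y => rexp (r ^ 2 * t) * g y :=
    (integrable_gaussianPDFReal _ _).const_mul _
  calc ∫ y in Ioi 0, Gr r t x y ≤ ∫ y in Ioi 0, rexp (r ^ 2 * t) * g y :=
      setIntegral_mono (integrableOn_Gr ht.le hx) hg.integrableOn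
        fun _ => Gr_le_exp_mul_gaussianPDFReal ht.le
    _ ≤ ∫ y, rexp (r ^ 2 * t) * g y :=
      setIntegral_le_integral hg (.of_forall fun y =>
        mul_nonneg (Real.exp_pos _).le (gaussianPDFReal_nonneg _ _ y))
    _ = rexp (r ^ 2 * t) := by
      rw [integral_const_mul, integral_gaussianPDFReal_eq_one _
        (Real.toNNReal_pos.2 (by positivity)).ne', mul_one]

end HeatKernel

section WeightedNorm

variable {r t x : ℝ}

lemma LrNorm_nonneg (r : ℝ) (v : ℝ → ℝ) : 0 ≤ LrNorm r v := by
  apply Real.sSup_nonneg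
  rintro _ ⟨x, -, rfl⟩
  positivity

lemma exp_mul_abs_le_LrNorm {v : ℝ → ℝ}
    (hv : BddAbove ((fun x => rexp (-r * x) * |v x|) '' Ici 0)) (hx : 0 ≤ x) :
    rexp (-r * x) * |v x| ≤ LrNorm r v :=
  le_csSup hv ⟨x, hx, rfl⟩

lemma abs_exp_mul_setIntegral_G_mul_le {v : ℝ → ℝ}
    (hv : BddAbove ((fun x => rexp (-r * x) * |v x|) '' Ici 0)) (ht : 0 < t) (hx : 0 ≤ x) :
    |rexp (-r * x) * ∫ y in Ioi 0, G t x y * v y| ≤ rexp (r ^ 2 * t) * LrNorm r v := by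
  have pointwise : ∀ y ∈ Ioi (0 : ℝ),
      ‖rexp (-r * x) * (G t x y * v y)‖ ≤ Gr r t x y * LrNorm r v := by
    intro y hy
    have hy : 0 ≤ y := (mem_Ioi.1 hy).le
    have hexp : rexp (-r * x) = rexp (-r * (x - y)) * rexp (-r * y) := by
      rw [← Real.exp_add]
      ring_nf
    calc ‖rexp (-r * x) * (G t x y * v y)‖ = rexp (-r * x) * (G t x y * |v y|) := by
          rw [Real.norm_eq_abs, abs_mul, abs_mul, Real.abs_exp,
            abs_of_nonneg (G_nonneg ht.le hx hy)]
      _ = Gr r t x y * (rexp (-r * y) * |v y|) := by rw [hexp, Gr]; ring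
      _ ≤ Gr r t x y * LrNorm r v :=
        mul_le_mul_of_nonneg_left (exp_mul_abs_le_LrNorm hv hy) (Gr_nonneg ht.le hx hy)
  calc |rexp (-r * x) * ∫ y in Ioi 0, G t x y * v y|
      = ‖∫ y in Ioi 0, rexp (-r * x) * (G t x y * v y)‖ := by
        rw [integral_const_mul, Real.norm_eq_abs]
    _ ≤ ∫ y in Ioi 0, Gr r t x y * LrNorm r v :=
      norm_integral_le_of_norm_le ((integrableOn_Gr ht.le hx).mul_const _)
        (ae_restrict_of_forall_mem measurableSet_Ioi pointwise)
    _ = (∫ y in Ioi 0, Gr r t x y) * LrNorm r v := integral_mul_const _ _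
    _ ≤ rexp (r ^ 2 * t) * LrNorm r v :=
      mul_le_mul_of_nonneg_right (setIntegral_Gr_le_exp ht hx) (LrNorm_nonneg r v)

lemma abs_exp_mul_heatConvolution_le {u : ℝ → ℝ → ℝ}
    (hu : ∀ s ∈ Ioo 0 t, BddAbove ((fun x => rexp (-r * x) * |u s x|) '' Ici 0))
    (hi : IntegrableOn (fun s => LrNorm r (u s)) (Ioc 0 t)) (hx : 0 ≤ x) :
    |rexp (-r * x) * ∫ s in Ioc 0 t, ∫ y in Ioi 0, G (t - s) x y * u s y| ≤
      rexp (r ^ 2 * t) * ∫ s in Ioc 0 t, LrNorm r (u s) := by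
  -- Drop the null set `{t}`, where `G (t - s)` takes a junk value.
  rw [integral_Ioc_eq_integral_Ioo, integral_Ioc_eq_integral_Ioo, ← integral_const_mul,
    ← integral_const_mul, ← Real.norm_eq_abs]
  refine norm_integral_le_of_norm_le ((hi.mono_set Ioo_subset_Ioc_self).const_mul _)
    (ae_restrict_of_forall_mem measurableSet_Ioo fun s hs => ?_)
  calc |rexp (-r * x) * ∫ y in Ioi 0, G (t - s) x y * u s y|
      ≤ rexp (r ^ 2 * (t - s)) * LrNorm r (u s) :=
        abs_exp_mul_setIntegral_G_mul_le (hu s hs) (sub_pos.2 hs.2) hx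
    _ ≤ rexp (r ^ 2 * t) * LrNorm r (u s) := by
      have := LrNorm_nonneg r (u s)
      gcongr
      exact sub_le_self t hs.1.le

end WeightedNorm

/-- Lemma 4.5 of Hambly–Kalsi: weighted sup bound for the heat convolution. -/
theorem stmt_3 (r T : ℝ) (hT : 0 < T) :
    ∃ C > (0:ℝ), ∀ u : ℝ → ℝ → ℝ,
      Measurable (Function.uncurry u) →
      (∀ s ∈ Icc (0:ℝ) T, BddAbove ((fun x => Real.exp (-r * x) * |u s x|) '' Ici 0)) →
      IntegrableOn (fun s => LrNorm r (u s)) (Icc 0 T) →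
      ∀ t ∈ Icc (0:ℝ) T, ∀ τ ∈ Icc (0:ℝ) t, ∀ x ≥ (0:ℝ),
        |Real.exp (-r * x) *
            ∫ s in Ioc (0:ℝ) τ, ∫ y in Ioi (0:ℝ), G (τ - s) x y * u s y|
          ≤ C * ∫ s in Ioc (0:ℝ) t, LrNorm r (u s) := by
  refine ⟨rexp (r ^ 2 * T), Real.exp_pos _, fun u _ hu hi t ht τ hτ x hx => ?_⟩
  have hτT : τ ≤ T := hτ.2.trans ht.2
  have hit : IntegrableOn (fun s => LrNorm r (u s)) (Ioc 0 t) :=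
    hi.mono_set (Ioc_subset_Icc_self.trans (Icc_subset_Icc_right ht.2))
  have hsub : Ioc 0 τ ⊆ Ioc 0 t := Ioc_subset_Ioc_right hτ.2
  calc _ ≤ rexp (r ^ 2 * τ) * ∫ s in Ioc 0 τ, LrNorm r (u s) :=
        abs_exp_mul_heatConvolution_le (fun s hs => hu s ⟨hs.1.le, hs.2.le.trans hτT⟩)
          (hit.mono_set hsub) hx
    _ ≤ rexp (r ^ 2 * T) * ∫ s in Ioc 0 t, LrNorm r (u s) := by
      gcongr ?_ * ?_
      · exact integral_nonneg fun s => LrNorm_nonneg r (u s)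
      · gcongr
      · exact setIntegral_mono_set hit (.of_forall fun s => LrNorm_nonneg r (u s))
          hsub.eventuallyLE
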